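/- Let p be a prime, q = 1/p, let μ ≥ 1 be an integer, and let n ≥ 1 be an odd integer. Then (1 − q^n)·P(n−1, p^μ) = P(n, p^μ) − q^n·P(n, p^{μ−1}). (When μ = 1 the last term vanishes automatically, since P(n, p^0) = P(n, 1) = 0.) -/

import Mathlib

/-- Number of symmetric `n × n` matrices over `ZMod m` with nonzero determinant. -/
noncomputable def Nsym (n m : ℕ) : ℕ :=
  Nat.card {A : Matrix (Fin n) (Fin n) (ZMod m) // A.IsSymm ∧ A.det ≠ 0}

/-- Proportion of symmetric `n × n` matrices over `ZMod m` with nonzero determinant. -/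
noncomputable def Psym (n m : ℕ) : ℝ :=
  (Nsym n m : ℝ) / (m : ℝ) ^ (n * (n + 1) / 2)

/-- `∏_{i=1}^n (1 - q^i)`. -/
noncomputable def qPoch (q : ℝ) (n : ℕ) : ℝ := ∏ i ∈ Finset.range n, (1 - q ^ (i + 1))

/-- `∏ (1 - q^i)⁻¹` over the even `i` with `2 ≤ i ≤ n`. -/
noncomputable def evenPochInv (q : ℝ) (n : ℕ) : ℝ :=
  ∏ i ∈ Finset.range (n / 2), (1 - q ^ (2 * (i + 1)))⁻¹

/-- The proportion of symmetric `n × n` matrices of corank `k` over a field with `1 / q` elements. -/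
noncomputable def corankProb (q : ℝ) (n k : ℕ) : ℝ :=
  if k ≤ n then
    qPoch q n * (q ^ (k * (k + 1) / 2) / qPoch q k) * evenPochInv q (n - k)
  else 0

theorem qPoch_succ (q : ℝ) (n : ℕ) : qPoch q (n + 1) = qPoch q n * (1 - q ^ (n + 1)) :=
  Finset.prod_range_succ _ _

theorem one_sub_pow_succ_ne_zero {q : ℝ} (h0 : 0 < q) (h1 : q < 1) (n : ℕ) :
    1 - q ^ (n + 1) ≠ 0 :=
  (sub_pos.2 (pow_lt_one₀ h0.le h1 n.succ_ne_zero)).ne'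

theorem qPoch_ne_zero {q : ℝ} (h0 : 0 < q) (h1 : q < 1) (n : ℕ) : qPoch q n ≠ 0 :=
  Finset.prod_ne_zero_iff.2 fun i _ => one_sub_pow_succ_ne_zero h0 h1 i

theorem triangle_succ (k : ℕ) : (k + 1) * (k + 1 + 1) / 2 = k * (k + 1) / 2 + (k + 1) := by
  rw [show (k + 1) * (k + 1 + 1) = k * (k + 1) + (k + 1) * 2 by ring,
    Nat.add_mul_div_right _ _ two_pos]

theorem evenPochInv_two_mul_add_one (q : ℝ) (h : ℕ) :
    evenPochInv q (2 * h + 1) = evenPochInv q (2 * h) := by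
  simp only [evenPochInv]
  rw [show (2 * h + 1) / 2 = 2 * h / 2 by omega]

theorem evenPochInv_two_mul_add_two {q : ℝ} (h0 : 0 < q) (h1 : q < 1) (h : ℕ) :
    (1 - q ^ (2 * h + 2)) * evenPochInv q (2 * h + 2) = evenPochInv q (2 * h) := by
  have := one_sub_pow_succ_ne_zero h0 h1 (2 * h + 1)
  simp only [evenPochInv]
  rw [show (2 * h + 2) / 2 = h + 1 by omega, show 2 * h / 2 = h by omega,
    Finset.prod_range_succ, show 2 * (h + 1) = 2 * h + 2 by ring]
  field_simp

theorem evenPochInv_one (q : ℝ) : evenPochInv q 1 = 1 := by simp [evenPochInv]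

theorem evenPochInv_zero (q : ℝ) : evenPochInv q 0 = 1 := by simp [evenPochInv]

theorem evenPochInv_add_two {q : ℝ} (h0 : 0 < q) (h1 : q < 1) (d : ℕ) :
    (1 - q ^ (d + 2)) * evenPochInv q (d + 2) =
      (1 - q) * evenPochInv q (d + 1) + q * evenPochInv q d := by
  obtain ⟨h, rfl | rfl⟩ := d.even_or_odd'
  · rw [evenPochInv_two_mul_add_one, evenPochInv_two_mul_add_two h0 h1]; ring
  · have e1 := evenPochInv_two_mul_add_one q (h + 1)
    have e2 := evenPochInv_two_mul_add_two h0 h1 h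
    rw [show 2 * (h + 1) = 2 * h + 2 by ring] at e1
    rw [show 2 * h + 1 + 2 = 2 * h + 2 + 1 by ring, show 2 * h + 1 + 1 = 2 * h + 2 by ring, e1,
      evenPochInv_two_mul_add_one, ← e2]
    ring

theorem corankProb_of_lt (q : ℝ) {n k : ℕ} (h : n < k) : corankProb q n k = 0 :=
  if_neg (by omega)

theorem corankProb_add (q : ℝ) (k d : ℕ) : corankProb q (k + d) k =
    qPoch q (k + d) * (q ^ (k * (k + 1) / 2) / qPoch q k) * evenPochInv q d := by
  rw [corankProb, if_pos (by omega), Nat.add_sub_cancel_left]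

theorem corankProb_zero_zero (q : ℝ) : corankProb q 0 0 = 1 := by
  simp [corankProb, qPoch, evenPochInv]

theorem qPoch_ratio_succ {q : ℝ} (h0 : 0 < q) (h1 : q < 1) (k : ℕ) :
    (1 - q ^ (k + 1)) * (q ^ ((k + 1) * (k + 1 + 1) / 2) / qPoch q (k + 1)) =
      q ^ (k + 1) * (q ^ (k * (k + 1) / 2) / qPoch q k) := by
  have := one_sub_pow_succ_ne_zero h0 h1 k
  have := qPoch_ne_zero h0 h1 k
  rw [triangle_succ, qPoch_succ, pow_add q (k * (k + 1) / 2)]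
  generalize q ^ (k + 1) = x at *
  field_simp

theorem corankProb_succ_zero {q : ℝ} (h0 : 0 < q) (h1 : q < 1) (m : ℕ) :
    corankProb q (m + 1) 0 =
      (1 - q) * corankProb q m 0 + q * (1 - q ^ m) * corankProb q (m - 1) 0 := by
  rcases m with _ | m
  · simp [corankProb, qPoch, evenPochInv]
  · have h := evenPochInv_add_two h0 h1 m
    have a := corankProb_add q 0 (m + 1 + 1)
    have b := corankProb_add q 0 (m + 1)
    have c := corankProb_add q 0 m
    simp only [zero_add] at a b c
    rw [a, b, Nat.add_sub_cancel, c, qPoch_succ q (m + 1), qPoch_succ q m]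
    linear_combination (qPoch q m * (1 - q ^ (m + 1)) * (q ^ (0 * 1 / 2) / qPoch q 0)) * h

theorem corankProb_succ_succ {q : ℝ} (h0 : 0 < q) (h1 : q < 1) (m i : ℕ) :
    corankProb q (m + 1) (i + 1) =
      (1 - q) * corankProb q m (i + 1) + q * (1 - q ^ m) * corankProb q (m - 1) (i + 1)
        + q ^ (m + 1) * corankProb q m i := by
  have hg := qPoch_ratio_succ h0 h1 i
  rcases lt_trichotomy m i with h | rfl | h
  · rw [corankProb_of_lt q (by omega : m + 1 < i + 1), corankProb_of_lt q (by omega : m < i + 1),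
      corankProb_of_lt q (by omega : m - 1 < i + 1), corankProb_of_lt q h]
    ring
  · have a := corankProb_add q (m + 1) 0
    have b := corankProb_add q m 0
    simp only [add_zero] at a b
    rw [corankProb_of_lt q (by omega : m < m + 1),
      corankProb_of_lt q (by omega : m - 1 < m + 1), a, b, qPoch_succ q m]
    rw [qPoch_succ q m] at hg
    linear_combination (qPoch q m * evenPochInv q 0) * hg
  · obtain ⟨d, rfl⟩ := Nat.exists_eq_add_of_lt h
    rcases d with _ | d
    · have a := corankProb_add q (i + 1) 1
      have b := corankProb_add q (i + 1) 0
      have c := corankProb_add q i 1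
      simp only [add_zero] at a b c ⊢
      rw [corankProb_of_lt q (by omega : i + 1 - 1 < i + 1), a, b, c, evenPochInv_zero,
        evenPochInv_one, qPoch_succ q (i + 1)]
      linear_combination (qPoch q (i + 1) * q) * hg
    · have h := evenPochInv_add_two h0 h1 d
      have a := corankProb_add q (i + 1) (d + 2)
      have b := corankProb_add q (i + 1) (d + 1)
      have c := corankProb_add q (i + 1) d
      have e := corankProb_add q i (d + 2)
      have hn : i + 1 + (d + 2) = i + d + 1 + 1 + 1 := by ring
      have hn1 : i + 1 + (d + 1) = i + d + 1 + 1 := by ring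
      have hn2 : i + 1 + d = i + d + 1 := by ring
      have hn3 : i + (d + 2) = i + d + 1 + 1 := by ring
      rw [hn] at a; rw [hn1] at b; rw [hn2] at c; rw [hn3] at e
      rw [show i + (d + 1) + 1 = i + d + 1 + 1 by ring, Nat.add_sub_cancel, a, b, c, e,
        qPoch_succ q (i + d + 1 + 1), qPoch_succ q (i + d + 1)]
      linear_combination (qPoch q (i + d + 1) * (1 - q ^ (i + d + 1 + 1)) *
        (q ^ ((i + 1) * (i + 1 + 1) / 2) / qPoch q (i + 1))) * h +
        (qPoch q (i + d + 1) * (1 - q ^ (i + d + 1 + 1)) * evenPochInv q (d + 2) * q ^ (d + 2)) * hg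

/-- For `n` odd, the coranks `2j` and `2j+1` are related. -/
theorem corankProb_odd_odd {q : ℝ} (h0 : 0 < q) (h1 : q < 1) {h j : ℕ} (hj : j ≤ h) :
    (1 - q ^ (2 * j + 1)) * corankProb q (2 * h + 1) (2 * j + 1) =
      q ^ (2 * j + 1) * corankProb q (2 * h + 1) (2 * j) := by
  obtain ⟨d, rfl⟩ := Nat.exists_eq_add_of_le hj
  have hg := qPoch_ratio_succ h0 h1 (2 * j)
  have a := corankProb_add q (2 * j + 1) (2 * d)
  have b := corankProb_add q (2 * j) (2 * d + 1)
  rw [show 2 * j + 1 + 2 * d = 2 * (j + d) + 1 by ring] at a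
  rw [show 2 * j + (2 * d + 1) = 2 * (j + d) + 1 by ring, evenPochInv_two_mul_add_one] at b
  rw [a, b]
  linear_combination (qPoch q (2 * (j + d) + 1) * evenPochInv q (2 * d)) * hg

theorem corankProb_even_even (q : ℝ) {h j : ℕ} (hj : j ≤ h) :
    (1 - q ^ (2 * h + 1)) * corankProb q (2 * h) (2 * j) =
      corankProb q (2 * h + 1) (2 * j) := by
  obtain ⟨d, rfl⟩ := Nat.exists_eq_add_of_le hj
  have a := corankProb_add q (2 * j) (2 * d)
  have b := corankProb_add q (2 * j) (2 * d + 1)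
  rw [show 2 * j + 2 * d = 2 * (j + d) by ring] at a
  rw [show 2 * j + (2 * d + 1) = 2 * (j + d) + 1 by ring, evenPochInv_two_mul_add_one] at b
  rw [a, b, qPoch_succ]
  ring

theorem corankProb_even_odd {q : ℝ} (h0 : 0 < q) (h1 : q < 1) {h j : ℕ} (hj : j ≤ h) :
    (1 - q ^ (2 * h + 1)) * corankProb q (2 * h) (2 * j + 1) =
      (1 - q ^ (2 * (h - j))) * corankProb q (2 * h + 1) (2 * j + 1) := by
  obtain ⟨d, rfl⟩ := Nat.exists_eq_add_of_le hj
  rw [Nat.add_sub_cancel_left]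
  rcases d with _ | d
  · rw [corankProb_of_lt q (by omega : 2 * (j + 0) < 2 * j + 1)]; simp
  · have a := corankProb_add q (2 * j + 1) (2 * d + 1)
    have b := corankProb_add q (2 * j + 1) (2 * d + 2)
    have e := evenPochInv_two_mul_add_two h0 h1 d
    rw [show 2 * j + 1 + (2 * d + 1) = 2 * (j + (d + 1)) by ring, evenPochInv_two_mul_add_one] at a
    rw [show 2 * j + 1 + (2 * d + 2) = 2 * (j + (d + 1)) + 1 by ring] at b
    rw [a, b, qPoch_succ q (2 * (j + (d + 1))), ← e]
    ring

theorem sum_range_two_mul (f : ℕ → ℝ) (h : ℕ) :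
    ∑ i ∈ Finset.range (2 * h), f i = ∑ j ∈ Finset.range h, (f (2 * j) + f (2 * j + 1)) := by
  induction h with
  | zero => simp
  | succ h ih => rw [Finset.sum_range_succ, ← ih, Nat.mul_succ, Finset.sum_range_succ,
      Finset.sum_range_succ, add_assoc]

theorem sum_corankProb_succ {q : ℝ} (h0 : 0 < q) (h1 : q < 1) (y : ℕ → ℝ) (m : ℕ) :
    ∑ i ∈ Finset.range (m + 2), corankProb q (m + 1) i * y i =
      (1 - q) * ∑ i ∈ Finset.range (m + 1), corankProb q m i * y i
        + q * (1 - q ^ m) * ∑ i ∈ Finset.range (m - 1 + 1), corankProb q (m - 1) i * y i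
        + q ^ (m + 1) * ∑ i ∈ Finset.range (m + 1), corankProb q m i * y (i + 1) := by
  have ext : ∀ a b : ℕ, a + 1 ≤ b → ∑ i ∈ Finset.range (a + 1), corankProb q a i * y i =
      ∑ i ∈ Finset.range b, corankProb q a i * y i := fun a b hab =>
    Finset.sum_subset (Finset.range_mono hab) fun i _ hi => by
      rw [corankProb_of_lt q (by simpa using hi), zero_mul]
  rw [ext m (m + 2) (by omega), ext (m - 1) (m + 2) (by omega)]
  simp only [Finset.sum_range_succ' _ (m + 1), corankProb_succ_succ h0 h1,
    corankProb_succ_zero h0 h1, add_mul, mul_add, Finset.sum_add_distrib, Finset.mul_sum]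
  simp only [mul_assoc]
  ring

/-- The formal part of the argument: the expansion of `P` along the corank modulo `p` forces the
relation between an odd size and the preceding even size. -/
theorem even_from_odd_of_corank_expansion {q : ℝ} (h0 : 0 < q) (h1 : q < 1) (P : ℕ → ℕ → ℝ)
    (hP0 : ∀ n, P n 0 = 0)
    (hP : ∀ n μ, 1 ≤ μ →
      P n μ = ∑ k ∈ Finset.range (n + 1), corankProb q n k * P k (μ - k)) (μ : ℕ) (h : ℕ) :
    (1 - q ^ (2 * h + 1)) * P (2 * h) μ =
      P (2 * h + 1) μ - q ^ (2 * h + 1) * P (2 * h + 1) (μ - 1) := by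
  induction μ using Nat.strong_induction_on generalizing h with
  | _ μ ih =>
  rcases Nat.eq_zero_or_pos μ with rfl | hμ
  · simp [hP0]
  have base : (1 - q) * P 0 μ = P 1 μ - q * P 1 (μ - 1) := by
    have := hP 1 μ hμ
    have c0 := corankProb_succ_zero h0 h1 0
    have c1 := corankProb_succ_succ h0 h1 0 0
    simp only [zero_add, corankProb_zero_zero, pow_zero, sub_self, mul_zero, zero_mul, add_zero,
      corankProb_of_lt q zero_lt_one, pow_one, mul_one] at c0 c1
    rw [Finset.sum_range_succ, Finset.sum_range_one, c0, c1, Nat.sub_zero] at this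
    linarith
  -- the relation in the range needed for the expansion of `P _ ν` with `ν ≤ μ`
  have pair : ∀ ν ≤ μ, ∀ j, (1 - q ^ (2 * j + 1)) * P (2 * j) (ν - 2 * j) =
      P (2 * j + 1) (ν - 2 * j) - q ^ (2 * j + 1) * P (2 * j + 1) (ν - (2 * j + 1)) := by
    intro ν hν j
    rcases (by omega : ν - 2 * j < μ ∨ (j = 0 ∧ ν = μ)) with hlt | ⟨rfl, rfl⟩
    · exact ih _ hlt j
    · simpa using base
  have odd : ∀ ν ≤ μ, P (2 * h + 1) ν = ∑ j ∈ Finset.range (h + 1),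
      corankProb q (2 * h + 1) (2 * j) / (1 - q ^ (2 * j + 1)) * P (2 * j + 1) (ν - 2 * j) := by
    intro ν hν
    rcases Nat.eq_zero_or_pos ν with rfl | hν0
    · simp [hP0]
    rw [hP _ ν hν0, show 2 * h + 1 + 1 = 2 * (h + 1) by ring, sum_range_two_mul]
    refine Finset.sum_congr rfl fun j hj => ?_
    have ne := one_sub_pow_succ_ne_zero h0 h1 (2 * j)
    have r := corankProb_odd_odd h0 h1 (Nat.lt_succ_iff.1 (Finset.mem_range.1 hj))
    have p := pair ν hν j
    field_simp
    linear_combination corankProb q (2 * h + 1) (2 * j) * p + P (2 * j + 1) (ν - (2 * j + 1)) * r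
  have even : P (2 * h) μ = ∑ j ∈ Finset.range (h + 1),
      (corankProb q (2 * h) (2 * j) * P (2 * j) (μ - 2 * j) +
        corankProb q (2 * h) (2 * j + 1) * P (2 * j + 1) (μ - (2 * j + 1))) := by
    rw [hP _ μ hμ, ← sum_range_two_mul
      (fun i => corankProb q (2 * h) i * P i (μ - i)), Nat.mul_succ,
      Finset.sum_range_succ _ (2 * h + 1),
      corankProb_of_lt q (by omega : 2 * h < 2 * h + 1), zero_mul, add_zero]
  rw [even, odd μ le_rfl, odd (μ - 1) (by omega), Finset.mul_sum, Finset.mul_sum,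
    ← Finset.sum_sub_distrib]
  refine Finset.sum_congr rfl fun j hj => ?_
  have hj' : j ≤ h := Nat.lt_succ_iff.1 (Finset.mem_range.1 hj)
  have ne := one_sub_pow_succ_ne_zero h0 h1 (2 * j)
  have r := corankProb_odd_odd h0 h1 hj'
  have ee := corankProb_even_even q hj'
  have eo := corankProb_even_odd h0 h1 hj'
  have p := pair μ le_rfl j
  have hq : q ^ (2 * h + 1) = q ^ (2 * (h - j)) * q ^ (2 * j + 1) := by
    rw [← pow_add]; congr 1; omega
  rw [show μ - 1 - 2 * j = μ - (2 * j + 1) by omega, mul_add, ← mul_assoc, ← mul_assoc, ee, eo,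
    hq]
  field_simp
  linear_combination corankProb q (2 * h + 1) (2 * j) * p +
    (1 - q ^ (2 * (h - j))) * P (2 * j + 1) (μ - (2 * j + 1)) * r

section Counting

open Matrix

variable {R : Type*} {ι κ α : Type*}

/-- The symmetric matrix with first row `x` and remaining block `D`. -/
def bordered (x : Unit ⊕ κ → R) (D : Matrix κ κ R) : Matrix (Unit ⊕ κ) (Unit ⊕ κ) R :=
  fromBlocks (of fun _ _ => x (Sum.inl ())) (of fun _ j => x (Sum.inr j))
    (of fun i _ => x (Sum.inr i)) D

theorem bordered_submatrix (e : ι ≃ κ) (x : Unit ⊕ κ → R) (D : Matrix κ κ R) :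
    (bordered x D).submatrix (Equiv.sumCongr (Equiv.refl _) e)
      (Equiv.sumCongr (Equiv.refl _) e) =
        bordered (x ∘ Equiv.sumCongr (Equiv.refl _) e) (D.submatrix e e) := by
  ext (i | i) (j | j) <;> rfl

theorem bordered_toBlocks₂₂ {M : Matrix (Unit ⊕ κ) (Unit ⊕ κ) R} (hM : M.IsSymm) :
    bordered (M (Sum.inl ())) M.toBlocks₂₂ = M := by
  ext (i | i) (j | j)
  · rfl
  · rfl
  · exact hM.apply _ _
  · rfl

variable [CommRing R]

/-- Symmetric matrices whose rows and columns indexed by `t` are divisible by `ϖ`. -/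
def IsDivSymm (ϖ : R) (t : ι → Prop) (M : Matrix ι ι R) : Prop :=
  M.IsSymm ∧ ∀ i j, t i → ϖ ∣ M i j

/-- The number of matrices with `IsDivSymm ϖ t` and nonzero determinant. -/
noncomputable def divSymmCount [Fintype ι] [DecidableEq ι] (ϖ : R) (t : ι → Prop) : ℕ :=
  Nat.card {M : Matrix ι ι R // IsDivSymm ϖ t M ∧ M.det ≠ 0}

/-- The number of blocks `D` with `IsDivSymm ϖ t` completing a given first row to a matrix
with nonzero determinant. -/
noncomputable def completionCount [Fintype κ] [DecidableEq κ] (ϖ : R) (t : κ → Prop)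
    (x : Unit ⊕ κ → R) : ℕ :=
  Nat.card {D : Matrix κ κ R // IsDivSymm ϖ t D ∧ (bordered x D).det ≠ 0}

theorem isDivSymm_submatrix_iff (ϖ : R) (e : ι ≃ κ) (t : κ → Prop) (M : Matrix κ κ R) :
    IsDivSymm ϖ (t ∘ e) (M.submatrix e e) ↔ IsDivSymm ϖ t M := by
  simp only [IsDivSymm, IsSymm.ext_iff, submatrix_apply, Function.comp_apply]
  refine and_congr ?_ ?_ <;>
  · rw [← e.forall_congr_right]
    exact forall_congr' fun i => by rw [← e.forall_congr_right]

theorem divSymmCount_comp_equiv [Fintype ι] [DecidableEq ι] [Fintype κ] [DecidableEq κ] (ϖ : R)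
    (e : ι ≃ κ) (t : κ → Prop) : divSymmCount ϖ (t ∘ e) = divSymmCount ϖ t := by
  refine (Nat.card_congr (Equiv.subtypeEquiv (reindex e.symm e.symm) fun M => ?_)).symm
  simp [isDivSymm_submatrix_iff]

theorem completionCount_comp_equiv [Fintype ι] [DecidableEq ι] [Fintype κ] [DecidableEq κ]
    (ϖ : R) (e : ι ≃ κ) (t : κ → Prop) (x : Unit ⊕ κ → R) :
    completionCount ϖ (t ∘ e) (x ∘ Equiv.sumCongr (Equiv.refl _) e) = completionCount ϖ t x := by
  refine (Nat.card_congr (Equiv.subtypeEquiv (reindex e.symm e.symm) fun M => ?_)).symm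
  simp only [reindex_apply, Equiv.symm_symm, isDivSymm_submatrix_iff, ← bordered_submatrix,
    det_submatrix_equiv_self]

/-- Elimination of an invertible diagonal block. -/
theorem card_fromBlocks_det_ne_zero [Fintype α] [DecidableEq α] [Fintype κ] [DecidableEq κ]
    (ϖ : R) (t : κ → Prop) (A : Matrix α α R) (hA : A.IsSymm) (hu : IsUnit A.det)
    (B : Matrix α κ R) (hB : ∀ i j, t j → ϖ ∣ B i j) :
    Nat.card {D : Matrix κ κ R // IsDivSymm ϖ t D ∧ (fromBlocks A B Bᵀ D).det ≠ 0} =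
      divSymmCount ϖ t := by
  have hAi : A⁻¹.IsSymm := by rw [IsSymm, transpose_nonsing_inv, hA]
  have hX : IsDivSymm ϖ t (Bᵀ * A⁻¹ * B) := by
    refine ⟨by simp [IsSymm, transpose_mul, hAi.eq, Matrix.mul_assoc], fun i j hi => ?_⟩
    rw [Matrix.mul_assoc, mul_apply]
    exact Finset.dvd_sum fun x _ => (hB x i hi).mul_right _
  let _ := invertibleOfIsUnitDet A hu
  refine Nat.card_congr (Equiv.subtypeEquiv (Equiv.subRight (Bᵀ * A⁻¹ * B)) fun D => ?_)
  rw [det_fromBlocks₁₁, invOf_eq_nonsing_inv, Equiv.subRight_apply, Ne, hu.mul_right_eq_zero]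
  refine and_congr_left fun _ => ⟨fun h => ⟨h.1.sub hX.1, fun i j hi =>
    dvd_sub (h.2 i j hi) (hX.2 i j hi)⟩, fun h => ?_⟩
  rw [← sub_add_cancel D (Bᵀ * A⁻¹ * B)]
  exact ⟨h.1.add hX.1, fun i j hi => dvd_add (h.2 i j hi) (hX.2 i j hi)⟩

theorem completionCount_of_isUnit [Fintype κ] [DecidableEq κ] (ϖ : R) (t : κ → Prop)
    {x : Unit ⊕ κ → R} (hx : IsUnit (x (Sum.inl ()))) (hb : ∀ j, t j → ϖ ∣ x (Sum.inr j)) :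
    completionCount ϖ t x = divSymmCount ϖ t :=
  card_fromBlocks_det_ne_zero ϖ t (of fun _ _ : Unit => x (Sum.inl ())) rfl (by simpa using hx)
    (of fun _ j => x (Sum.inr j)) fun _ => hb

open Classical in
/-- The possible rows: vectors whose entries indexed by `t` are divisible by `ϖ`. -/
noncomputable def divRows [Fintype R] [Fintype κ] (ϖ : R) (t : κ → Prop) : Finset (κ → R) :=
  Finset.univ.filter fun b => ∀ j, t j → ϖ ∣ b j

theorem mem_divRows [Fintype R] [Fintype κ] {ϖ : R} {t : κ → Prop} {b : κ → R} :
    b ∈ divRows ϖ t ↔ ∀ j, t j → ϖ ∣ b j := by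
  simp [divRows]

theorem divRows_subset [Fintype R] [Fintype κ] {ϖ : R} {t t' : κ → Prop} (h : ∀ j, t j → t' j) :
    divRows ϖ t' ⊆ divRows ϖ t := fun _ hb =>
  mem_divRows.2 fun j hj => mem_divRows.1 hb j (h j hj)

theorem card_divRows [Fintype R] [Fintype κ] (ϖ : R) (t : κ → Prop) :
    (divRows ϖ t).card = Nat.card {x : R // ϖ ∣ x} ^ Nat.card {j // t j} *
      Nat.card R ^ Nat.card {j // ¬ t j} := by
  classical
  have h : (divRows ϖ t).card = Nat.card {b : κ → R // ∀ j, t j → ϖ ∣ b j} := by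
    rw [Nat.card_eq_fintype_card, Fintype.card_subtype, divRows]
  rw [h, Nat.card_congr (Equiv.subtypePiEquivPi (p := fun j y => t j → ϖ ∣ y)), Nat.card_pi,
    Nat.card_eq_fintype_card (α := {j // t j}), Nat.card_eq_fintype_card (α := {j // ¬ t j}),
    Fintype.card_subtype, Fintype.card_subtype,
    ← Finset.prod_const, ← Finset.prod_const, ← Finset.prod_ite]
  refine Finset.prod_congr rfl fun j _ => ?_
  split_ifs with hj <;> simp [hj]

theorem card_divRows_comp_equiv [Fintype R] [Fintype ι] [Fintype κ] (ϖ : R) (e : ι ≃ κ)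
    (t : κ → Prop) : (divRows ϖ (t ∘ e)).card = (divRows ϖ t).card := by
  simp only [card_divRows, Function.comp_apply]
  rw [Nat.card_congr (e.subtypeEquiv (q := t) fun _ => Iff.rfl),
    Nat.card_congr (e.subtypeEquiv (q := fun j => ¬ t j) fun _ => Iff.rfl)]

theorem isDivSymm_bordered [Fintype R] [Fintype κ] (ϖ : R) (t : Unit ⊕ κ → Prop)
    (x : Unit ⊕ κ → R) (D : Matrix κ κ R) :
    IsDivSymm ϖ t (bordered x D) ↔
      x ∈ divRows ϖ (fun j => t (Sum.inl ()) ∨ t j) ∧ IsDivSymm ϖ (t ∘ Sum.inr) D := by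
  simp only [IsDivSymm, IsSymm.ext_iff, bordered, Sum.forall, fromBlocks_apply₁₁, mem_divRows,
    fromBlocks_apply₁₂, fromBlocks_apply₂₁, fromBlocks_apply₂₂, of_apply, Function.comp_apply]
  constructor
  · rintro ⟨⟨-, h⟩, h1, h2⟩
    exact ⟨⟨fun _ h' => (h1 ()).1 () (h'.elim id id), fun j hj => hj.elim (fun h' => (h1 ()).2 j h')
      fun h' => (h2 j).1 () h'⟩, fun i j => (h i).2 j, fun i j hi => (h2 i).2 j hi⟩
  · rintro ⟨⟨ha, hb⟩, h, h'⟩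
    exact ⟨⟨fun _ => ⟨fun _ => trivial, fun _ => trivial⟩, fun i => ⟨fun _ => trivial, fun j => h i j⟩⟩,
      fun _ => ⟨fun _ h1 => ha () (Or.inl h1), fun j h1 => hb j (Or.inl h1)⟩,
      fun i => ⟨fun _ h1 => hb i (Or.inr h1), fun j h1 => h' i j h1⟩⟩

/-- Matrices on `Unit ⊕ κ` counted according to their first row. -/
theorem card_isDivSymm_and [Fintype R] [Fintype κ] (ϖ : R) (t : Unit ⊕ κ → Prop)
    (Q : Matrix (Unit ⊕ κ) (Unit ⊕ κ) R → Prop) :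
    Nat.card {M // IsDivSymm ϖ t M ∧ Q M} =
      ∑ x ∈ divRows ϖ (fun j => t (Sum.inl ()) ∨ t j),
          Nat.card {D // IsDivSymm ϖ (t ∘ Sum.inr) D ∧ Q (bordered x D)} := by
  have key : ∀ M, IsDivSymm ϖ t M → IsDivSymm ϖ t (bordered (M (Sum.inl ())) M.toBlocks₂₂) :=
    fun M hM => by rwa [bordered_toBlocks₂₂ hM.1]
  rw [← Finset.sum_coe_sort, ← Nat.card_sigma]
  refine Nat.card_congr
    { toFun := fun M => ⟨⟨M.1 (Sum.inl ()), ((isDivSymm_bordered ϖ t _ _).1 (key _ M.2.1)).1⟩,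
        M.1.toBlocks₂₂, ((isDivSymm_bordered ϖ t _ _).1 (key _ M.2.1)).2, by
          rw [bordered_toBlocks₂₂ M.2.1.1]; exact M.2.2⟩
      invFun := fun x => ⟨bordered x.1.1 x.2.1, (isDivSymm_bordered ϖ t _ _).2 ⟨x.1.2, x.2.2.1⟩,
        x.2.2.2⟩
      left_inv := fun M => Subtype.ext (bordered_toBlocks₂₂ M.2.1.1)
      right_inv := ?_ }
  rintro ⟨⟨x, hx⟩, D, hD⟩
  refine Sigma.subtype_ext (Subtype.ext ?_) rfl
  ext (i | i) <;> rfl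

/-- Elimination of a `2 × 2` block with nonunit first diagonal entry. -/
theorem completionCount_of_isUnit_second [Fintype R] [Fintype κ] [DecidableEq κ] (ϖ : R)
    (hϖ : ∀ y : R, ϖ ∣ y ↔ ¬ IsUnit y) (t : Unit ⊕ κ → Prop) (ht : ¬ t (Sum.inl ()))
    {x : Unit ⊕ (Unit ⊕ κ) → R} (hx : ϖ ∣ x (Sum.inl ())) (hu : IsUnit (x (Sum.inr (Sum.inl ()))))
    (hb : ∀ j, t j → ϖ ∣ x (Sum.inr j)) :
    completionCount ϖ t x = (divRows ϖ t).card * divSymmCount ϖ (t ∘ Sum.inr) := by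
  rw [completionCount, card_isDivSymm_and]
  simp only [ht, false_or]
  rw [← smul_eq_mul]
  refine Finset.sum_eq_card_nsmul fun y hy => ?_
  set A : Matrix (Unit ⊕ Unit) (Unit ⊕ Unit) R :=
    bordered (fun i => x (Equiv.sumAssoc Unit Unit κ (Sum.inl i))) (of fun _ _ => y (Sum.inl ())) with hA
  have hdet : IsUnit A.det := by
    have : A.det = x (Sum.inl ()) * y (Sum.inl ()) -
        x (Sum.inr (Sum.inl ())) * x (Sum.inr (Sum.inl ())) := by
      rw [← det_submatrix_equiv_self (finSumFinEquiv.symm.trans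
        (Equiv.sumCongr finOneEquiv finOneEquiv) : Fin 2 ≃ Unit ⊕ Unit), det_fin_two]
      rfl
    rw [this]
    by_contra h
    have h1 := (dvd_sub_right (hx.mul_right _)).1 ((hϖ _).2 h)
    exact (hϖ _).1 h1 (hu.mul hu)
  rw [← card_fromBlocks_det_ne_zero ϖ (t ∘ Sum.inr) A ?_ hdet
    (of (Sum.elim (fun _ j => x (Sum.inr (Sum.inr j))) fun _ j => y (Sum.inr j))) ?_]
  · refine Nat.card_congr (Equiv.subtypeEquiv (Equiv.refl _) fun D => and_congr_right fun _ => ?_)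
    rw [← det_submatrix_equiv_self (Equiv.sumAssoc Unit Unit κ)]
    refine Iff.of_eq (congrArg (fun M => det M ≠ 0) ?_)
    ext ((i | i) | i) ((j | j) | j) <;> rfl
  · ext (i | i) (j | j) <;> rfl
  · rintro (i | i) j hj
    · exact hb _ hj
    · exact mem_divRows.1 hy _ hj

theorem exists_equiv_unit_sum [DecidableEq κ] (j : κ) :
    ∃ e : Unit ⊕ {i // i ≠ j} ≃ κ, e (Sum.inl ()) = j :=
  ⟨((Equiv.sumComm _ _).trans (Equiv.optionEquivSumPUnit _).symm).trans (Equiv.optionSubtypeNe j),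
    by simp⟩

theorem divSymmCount_eq_add [Fintype R] [Fintype κ] [DecidableEq κ] (ϖ : R)
    (hϖ : ∀ y : R, ϖ ∣ y ↔ ¬ IsUnit y) (t : Unit ⊕ κ → Prop) (ht : ¬ t (Sum.inl ())) (V : ℝ)
    (hV : ∀ j : κ, ∀ e : Unit ⊕ {i // i ≠ j} ≃ κ, e (Sum.inl ()) = j → ¬ t (Sum.inr j) →
      (divSymmCount ϖ (t ∘ Sum.inr ∘ e ∘ Sum.inr) : ℝ) = V) :
    (divSymmCount ϖ t : ℝ) =
      ((divRows ϖ t).card - (divRows ϖ (Sum.elim (fun _ : Unit => True) (t ∘ Sum.inr))).card) *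
          divSymmCount ϖ (t ∘ Sum.inr) +
        ((divRows ϖ (Sum.elim (fun _ : Unit => True) (t ∘ Sum.inr))).card -
            (divRows ϖ (fun _ : Unit ⊕ κ => True)).card) *
          ((divRows ϖ (t ∘ Sum.inr)).card * V) +
        divSymmCount ϖ (Sum.elim (fun _ : Unit => True) (t ∘ Sum.inr)) := by
  classical
  have hBA : divRows ϖ (Sum.elim (fun _ : Unit => True) (t ∘ Sum.inr)) ⊆ divRows ϖ t :=
    divRows_subset (by rintro (⟨⟩ | j) h <;> simp_all)
  have hCB : divRows ϖ (fun _ : Unit ⊕ κ => True) ⊆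
      divRows ϖ (Sum.elim (fun _ : Unit => True) (t ∘ Sum.inr)) := divRows_subset fun _ _ => trivial
  have e1 : divSymmCount ϖ t = ∑ x ∈ divRows ϖ t, completionCount ϖ (t ∘ Sum.inr) x := by
    rw [divSymmCount, card_isDivSymm_and]
    simp only [ht, false_or]
    rfl
  have e2 : divSymmCount ϖ (Sum.elim (fun _ : Unit => True) (t ∘ Sum.inr)) =
      ∑ x ∈ divRows ϖ (fun _ : Unit ⊕ κ => True), completionCount ϖ (t ∘ Sum.inr) x := by
    rw [divSymmCount, card_isDivSymm_and]
    simp only [Sum.elim_inl, true_or]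
    rfl
  rw [e1, e2, ← Finset.sum_sdiff hBA, ← Finset.sum_sdiff hCB]
  push_cast
  rw [← add_assoc]
  congr 2
  · rw [← Nat.cast_sub (Finset.card_le_card hBA), ← Finset.card_sdiff_of_subset hBA,
      ← nsmul_eq_mul]
    refine Finset.sum_eq_card_nsmul fun x hx => ?_
    rw [Finset.mem_sdiff, mem_divRows, mem_divRows] at hx
    rw [completionCount_of_isUnit]
    · by_contra hn
      refine hx.2 ?_
      rintro (⟨⟩ | j) hj
      · exact (hϖ _).2 hn
      · exact hx.1 _ hj
    · exact fun j hj => hx.1 _ hj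
  · rw [← Nat.cast_sub (Finset.card_le_card hCB), ← Finset.card_sdiff_of_subset hCB,
      ← nsmul_eq_mul]
    refine Finset.sum_eq_card_nsmul fun x hx => ?_
    rw [Finset.mem_sdiff, mem_divRows, mem_divRows] at hx
    have ha : ϖ ∣ x (Sum.inl ()) := hx.1 (Sum.inl ()) trivial
    obtain ⟨j, hj⟩ : ∃ j, ¬ ϖ ∣ x (Sum.inr j) := by
      by_contra! hn
      refine hx.2 ?_
      rintro (⟨⟩ | j) -
      exacts [ha, hn j]
    have htj : ¬ t (Sum.inr j) := fun h => hj (hx.1 (Sum.inr j) h)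
    obtain ⟨e, he⟩ := exists_equiv_unit_sum j
    rw [← completionCount_comp_equiv ϖ e, completionCount_of_isUnit_second ϖ hϖ, Nat.cast_mul,
      card_divRows_comp_equiv]
    · congr 1
      exact hV j e he htj
    · simpa [he] using htj
    · exact ha
    · simpa [he, hϖ] using hj
    · exact fun i hi => hx.1 (Sum.inr (e i)) hi

end Counting

section Expansion

variable {R : Type*} [CommRing R] {κ : Type}

theorem card_subtype_unit_sum_of_not [Finite κ] (t : Unit ⊕ κ → Prop) (ht : ¬ t (Sum.inl ())) :
    Nat.card {i // t i} = Nat.card {j // t (Sum.inr j)} := by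
  rw [Nat.card_congr Equiv.subtypeSum, Nat.card_sum]
  simp [ht]

theorem card_subtype_unit_sum_of_pos [Finite κ] (t : Unit ⊕ κ → Prop) (ht : t (Sum.inl ())) :
    Nat.card {i // t i} = Nat.card {j // t (Sum.inr j)} + 1 := by
  rw [Nat.card_congr Equiv.subtypeSum, Nat.card_sum, add_comm]
  simp [ht]

/-- The number of matrices with `IsDivSymm ϖ t` and nonzero determinant, expanded along the
corank modulo `ϖ` of the block on which `t` fails. -/
theorem divSymmCount_eq_sum_corankProb [Fintype R] (ϖ : R) (hϖ : ∀ y : R, ϖ ∣ y ↔ ¬ IsUnit y)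
    {q : ℝ} (h0 : 0 < q) (h1 : q < 1) (hs : (Nat.card {x : R // ϖ ∣ x} : ℝ) = q * Nat.card R)
    (y : ℕ → ℝ) (hy : ∀ k, (divSymmCount ϖ (fun _ : Fin k => True) : ℝ) =
      (q * Nat.card R) ^ (k * (k + 1) / 2) * y k) (m : ℕ) :
    ∀ (ι : Type) [Fintype ι] [DecidableEq ι] (t : ι → Prop) (k : ℕ), Nat.card {i // ¬ t i} = m →
      Nat.card {i // t i} = k → (divSymmCount ϖ t : ℝ) =
        (Nat.card R : ℝ) ^ (m * (m + 1) / 2) *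
          (q * Nat.card R) ^ (m * k + k * (k + 1) / 2) *
            ∑ i ∈ Finset.range (m + 1), corankProb q m i * y (k + i) := by
  induction m using Nat.strong_induction_on with
  | _ m ih =>
  intro ι _ _ t k hm hk
  rcases m with _ | m
  · have ht : ∀ i, t i := fun i => by
      by_contra hi
      have := Finite.card_eq_zero_iff.1 hm
      exact this.elim ⟨i, hi⟩
    have hc : Fintype.card ι = k := by
      rw [← hk, Nat.card_congr (Equiv.subtypeUnivEquiv ht), Nat.card_eq_fintype_card]
    have : t = (fun _ : Fin k => True) ∘ Fintype.equivFinOfCardEq hc := by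
      ext i; simp [ht i]
    rw [this, divSymmCount_comp_equiv, hy]
    simp [corankProb_zero_zero]
  · obtain ⟨i₀, hi₀⟩ : ∃ i, ¬ t i := by
      have : Nonempty {i // ¬ t i} := (Nat.card_pos_iff.1 (by omega)).1
      exact ⟨_, this.some.2⟩
    obtain ⟨e, he⟩ := exists_equiv_unit_sum i₀
    rw [← divSymmCount_comp_equiv ϖ e]
    rw [← Nat.card_congr (e.subtypeEquiv fun _ => Iff.rfl)] at hm hk
    change Nat.card {i // ¬ (t ∘ e) i} = _ at hm
    change Nat.card {i // (t ∘ e) i} = _ at hk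
    have ht : ¬ (t ∘ e) (Sum.inl ()) := by simpa [he] using hi₀
    generalize t ∘ e = u at hm hk ht ⊢
    have hm' : Nat.card {j // ¬ (u ∘ Sum.inr) j} = m := by
      rw [card_subtype_unit_sum_of_pos _ ht] at hm
      exact Nat.succ_injective hm
    have hk' : Nat.card {j // (u ∘ Sum.inr) j} = k := by
      rwa [card_subtype_unit_sum_of_not _ ht] at hk
    set v : Unit ⊕ {i // i ≠ i₀} → Prop := Sum.elim (fun _ => True) (u ∘ Sum.inr) with hv
    have hmv : Nat.card {j // ¬ v j} = m := by
      rw [← hm', card_subtype_unit_sum_of_not _ (by simp [hv])]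
      rfl
    have hkv : Nat.card {j // v j} = k + 1 := by
      rw [← hk', card_subtype_unit_sum_of_pos _ (by simp [hv])]
      rfl
    rw [divSymmCount_eq_add ϖ hϖ u ht ((Nat.card R : ℝ) ^ ((m - 1) * (m - 1 + 1) / 2) *
      (q * Nat.card R) ^ ((m - 1) * k + k * (k + 1) / 2) *
        ∑ i ∈ Finset.range (m - 1 + 1), corankProb q (m - 1) i * y (k + i)),
      ih m (by omega) _ (u ∘ Sum.inr) k hm' hk', ih m (by omega) _ v (k + 1) hmv hkv]
    · have hT : Nat.card {j : Unit ⊕ {i // i ≠ i₀} // True} = m + 1 + k := by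
        rw [← hm, ← hk, Nat.card_congr (Equiv.subtypeUnivEquiv fun _ => trivial),
          ← Nat.card_sum]
        classical
        exact (Nat.card_congr ((Equiv.sumComm _ _).trans (Equiv.sumCompl u))).symm
      have hF : Nat.card {j : Unit ⊕ {i // i ≠ i₀} // ¬ True} = 0 := by simp
      simp only [card_divRows]
      rw [hm, hk, hm', hk', hmv, hkv, hT, hF]
      have hsum := sum_corankProb_succ h0 h1 (fun i => y (k + i)) m
      push_cast
      rw [hs, hsum]
      simp only [show ∀ i, k + 1 + i = k + (i + 1) from fun i => by ring]
      generalize (∑ i ∈ Finset.range (m - 1 + 1), corankProb q (m - 1) i * y (k + i)) = S₂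
      generalize (∑ i ∈ Finset.range (m + 1), corankProb q m i * y (k + i)) = S₁
      generalize (∑ i ∈ Finset.range (m + 1), corankProb q m i * y (k + (i + 1))) = S₃
      generalize (Nat.card R : ℝ) = r
      rcases m with _ | m
      · rw [triangle_succ, triangle_succ]
        generalize k * (k + 1) / 2 = K
        norm_num
        ring
      · rw [triangle_succ k, triangle_succ (m + 1), triangle_succ m, Nat.add_sub_cancel]
        generalize k * (k + 1) / 2 = K
        generalize m * (m + 1) / 2 = N
        ring
    · intro j e' he' hj
      rw [← Nat.card_congr (e'.subtypeEquiv fun _ => Iff.rfl),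
        card_subtype_unit_sum_of_pos _ (by simpa [he'] using hj)] at hm'
      rw [← Nat.card_congr (e'.subtypeEquiv fun _ => Iff.rfl),
        card_subtype_unit_sum_of_not _ (by simpa [he'] using hj)] at hk'
      exact ih (m - 1) (by omega) _ _ k (by rw [← hm', Nat.add_sub_cancel]; rfl) hk'

end Expansion

section ZModCounting

open Matrix

/-- The symmetric matrix with entries given by a function on unordered pairs. -/
def symmOf {R ι : Type*} (f : Sym2 ι → R) : Matrix ι ι R := of fun i j => f s(i, j)

/-- Symmetric matrices as functions on unordered pairs. -/
def symmEquiv (R ι : Type*) : (Sym2 ι → R) ≃ {M : Matrix ι ι R // M.IsSymm} where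
  toFun f := ⟨symmOf f, by ext i j; simp [symmOf, Sym2.eq_swap]⟩
  invFun M := Sym2.lift ⟨M.1, fun i j => M.2.apply j i⟩
  left_inv f := by ext z; induction z with | _ i j => rfl
  right_inv M := by ext i j; rfl

theorem card_symm_and {R ι : Type*} (Q : Matrix ι ι R → Prop) :
    Nat.card {M : Matrix ι ι R // M.IsSymm ∧ Q M} =
      Nat.card {f : Sym2 ι → R // Q (symmOf f)} :=
  Nat.card_congr ((Equiv.subtypeSubtypeEquivSubtypeInter _ _).symm.trans
    ((symmEquiv R ι).subtypeEquiv fun _ => Iff.rfl).symm)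

/-- A surjective homomorphism of finite groups preserves proportions. -/
theorem card_preimage_mul_card {G H : Type*} [AddGroup G] [AddGroup H] [Finite G] [Finite H]
    (f : G →+ H) (hf : Function.Surjective f) (Q : H → Prop) :
    Nat.card {g // Q (f g)} * Nat.card H = Nat.card {h // Q h} * Nat.card G := by
  have key : ∀ Q : H → Prop, Nat.card {g // Q (f g)} = Nat.card {h // Q h} * Nat.card f.ker := by
    intro Q
    rw [← Nat.card_prod]
    refine Nat.card_congr ((Equiv.sigmaFiberEquiv
      (fun g : {g // Q (f g)} => (⟨f g.1, g.2⟩ : {h // Q h}))).symm.trans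
      ((Equiv.sigmaCongrRight fun h => ?_).trans (Equiv.sigmaEquivProd _ _)))
    refine Equiv.trans ?_ (AddMonoidHom.fiberEquivKerOfSurjective hf h.1)
    exact ⟨fun g => ⟨g.1.1, congrArg Subtype.val g.2⟩,
      fun g => ⟨⟨g.1, by rw [show f g.1 = h.1 from g.2]; exact h.2⟩, Subtype.ext g.2⟩,
      fun _ => rfl, fun _ => rfl⟩
  have h := key fun _ => True
  rw [Nat.card_congr (Equiv.subtypeUnivEquiv fun _ => trivial),
    Nat.card_congr (Equiv.subtypeUnivEquiv fun _ => trivial)] at h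
  rw [key Q, h]
  ring

theorem card_sym2_fun (R : Type*) (k : ℕ) :
    Nat.card (Sym2 (Fin k) → R) = Nat.card R ^ (k * (k + 1) / 2) := by
  rw [Nat.card_fun, Nat.card_eq_fintype_card (α := Sym2 (Fin k)), Sym2.card, Fintype.card_fin,
    Nat.choose_two_right, Nat.add_sub_cancel, mul_comm k]

theorem prime_dvd_iff_not_isUnit {p μ : ℕ} (hp : p.Prime) (hμ : 1 ≤ μ) (y : ZMod (p ^ μ)) :
    (p : ZMod (p ^ μ)) ∣ y ↔ ¬ IsUnit y := by
  have : NeZero (p ^ μ) := ⟨(pow_pos hp.pos μ).ne'⟩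
  obtain ⟨n, rfl⟩ := ZMod.natCast_zmod_surjective y
  rw [ZMod.isUnit_iff_coprime, Nat.coprime_pow_right_iff hμ, Nat.coprime_comm,
    hp.coprime_iff_not_dvd, not_not]
  refine ⟨fun ⟨c, hc⟩ => ?_, fun ⟨c, hc⟩ => ⟨c, by rw [hc, Nat.cast_mul]⟩⟩
  have hd : p ∣ p ^ μ := dvd_pow_self p (by omega)
  have := congrArg (ZMod.castHom hd (ZMod p)) hc
  rwa [map_natCast, map_mul, map_natCast, ZMod.natCast_self, zero_mul,
    ZMod.natCast_eq_zero_iff] at this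

theorem prime_mul_card_dvd {p μ : ℕ} (hp : p.Prime) (hμ : 1 ≤ μ) :
    p * Nat.card {x : ZMod (p ^ μ) // (p : ZMod (p ^ μ)) ∣ x} = p ^ μ := by
  have : NeZero (p ^ μ) := ⟨(pow_pos hp.pos μ).ne'⟩
  have : NeZero p := ⟨hp.ne_zero⟩
  have hd : p ∣ p ^ μ := dvd_pow_self p (by omega)
  have h := card_preimage_mul_card (ZMod.castHom hd (ZMod p)).toAddMonoidHom
    (ZMod.castHom_surjective hd) (fun y => y = 0)
  rw [Nat.card_zmod, Nat.card_zmod, Nat.card_unique (α := {y : ZMod p // y = 0}), one_mul,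
    mul_comm] at h
  refine Eq.trans (congrArg (p * ·) (Nat.card_congr (Equiv.subtypeEquivRight fun y => ?_))) h
  obtain ⟨n, rfl⟩ := ZMod.natCast_zmod_surjective y
  rw [prime_dvd_iff_not_isUnit hp hμ, ZMod.isUnit_iff_coprime, Nat.coprime_pow_right_iff hμ,
    Nat.coprime_comm, hp.coprime_iff_not_dvd, not_not]
  simp [ZMod.natCast_eq_zero_iff]

theorem prime_pow_mul_eq_zero_iff {p μ : ℕ} (hp : p.Prime) (k : ℕ) (y : ZMod (p ^ μ)) :
    (p : ZMod (p ^ μ)) ^ k * y = 0 ↔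
      ZMod.castHom (pow_dvd_pow p (Nat.sub_le μ k)) (ZMod (p ^ (μ - k))) y = 0 := by
  have : NeZero (p ^ μ) := ⟨(pow_pos hp.pos μ).ne'⟩
  obtain ⟨n, rfl⟩ := ZMod.natCast_zmod_surjective y
  rw [map_natCast, ZMod.natCast_eq_zero_iff, ← Nat.cast_pow, ← Nat.cast_mul,
    ZMod.natCast_eq_zero_iff]
  rcases le_total k μ with h | h
  · conv_lhs => rw [← Nat.add_sub_cancel' h, pow_add]
    exact Nat.mul_dvd_mul_iff_left (pow_pos hp.pos k)
  · rw [Nat.sub_eq_zero_of_le h, pow_zero]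
    exact iff_of_true ((pow_dvd_pow p h).mul_right n) (one_dvd n)

theorem Nsym_eq (n m : ℕ) :
    Nsym n m = Nat.card {f : Sym2 (Fin n) → ZMod m // (symmOf f).det ≠ 0} :=
  card_symm_and _

theorem divSymmCount_true_eq {p μ : ℕ} (hp : p.Prime) (k : ℕ) :
    (divSymmCount (p : ZMod (p ^ μ)) (fun _ : Fin k => True) : ℝ) =
      (Nat.card {x : ZMod (p ^ μ) // (p : ZMod (p ^ μ)) ∣ x} : ℝ) ^ (k * (k + 1) / 2) *
        Psym k (p ^ (μ - k)) := by
  have : NeZero (p ^ μ) := ⟨(pow_pos hp.pos μ).ne'⟩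
  have : NeZero (p ^ (μ - k)) := ⟨(pow_pos hp.pos (μ - k)).ne'⟩
  let ϖ : ZMod (p ^ μ) := p
  let I : AddSubgroup (ZMod (p ^ μ)) := (AddMonoidHom.mulLeft ϖ).range
  have hI : ∀ x, x ∈ I ↔ ϖ ∣ x := fun x => by
    simp only [I, AddMonoidHom.mem_range, AddMonoidHom.coe_mulLeft, dvd_def, eq_comm]
  let φ : ZMod (p ^ μ) →+ ZMod (p ^ (μ - k)) :=
    (ZMod.castHom (pow_dvd_pow p (Nat.sub_le μ k)) (ZMod (p ^ (μ - k)))).toAddMonoidHom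
  have h₁ := card_preimage_mul_card ((AddMonoidHom.mulLeft ϖ).rangeRestrict.compLeft (Sym2 (Fin k)))
    ((AddMonoidHom.rangeRestrict_surjective _).comp_left)
    (fun f => (symmOf fun z => (f z : ZMod (p ^ μ))).det ≠ 0)
  have h₂ := card_preimage_mul_card (φ.compLeft (Sym2 (Fin k)))
    ((ZMod.castHom_surjective (pow_dvd_pow p (Nat.sub_le μ k))).comp_left)
    (fun f => (symmOf f).det ≠ 0)
  have e : ∀ f : Sym2 (Fin k) → ZMod (p ^ μ),
      (symmOf fun z => ((AddMonoidHom.mulLeft ϖ).rangeRestrict.compLeft (Sym2 (Fin k)) f z :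
        ZMod (p ^ μ))).det ≠ 0 ↔ (symmOf (φ.compLeft (Sym2 (Fin k)) f)).det ≠ 0 := by
    intro f
    have e₁ : (symmOf fun z => ((AddMonoidHom.mulLeft ϖ).rangeRestrict.compLeft (Sym2 (Fin k)) f z :
        ZMod (p ^ μ))) = ϖ • symmOf f := rfl
    have e₂ : symmOf (φ.compLeft (Sym2 (Fin k)) f) =
        (ZMod.castHom (pow_dvd_pow p (Nat.sub_le μ k)) (ZMod (p ^ (μ - k)))).mapMatrix
          (symmOf f) := rfl
    rw [e₁, e₂, det_smul, Fintype.card_fin, ← RingHom.map_det, Ne, Ne,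
      prime_pow_mul_eq_zero_iff hp]
  have hc : divSymmCount ϖ (fun _ : Fin k => True) =
      Nat.card {f : Sym2 (Fin k) → I // (symmOf fun z => (f z : ZMod (p ^ μ))).det ≠ 0} := by
    simp only [divSymmCount, IsDivSymm, and_assoc]
    rw [card_symm_and]
    refine Nat.card_congr
      { toFun := fun f => ⟨fun z => ⟨f.1 z, (hI _).2 ?_⟩, f.2.2⟩
        invFun := fun f => ⟨fun z => f.1 z, fun i j _ => (hI _).1 (f.1 s(i, j)).2, f.2⟩
        left_inv := fun _ => rfl
        right_inv := fun _ => rfl }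
    induction z with | _ i j => exact f.2.1 i j trivial
  have hs : Nat.card {x : ZMod (p ^ μ) // ϖ ∣ x} = Nat.card I :=
    Nat.card_congr (Equiv.subtypeEquivRight fun x => (hI x).symm)
  simp only [e] at h₁
  rw [← Nsym_eq, card_sym2_fun, card_sym2_fun, Nat.card_zmod, Nat.card_zmod] at h₂
  rw [← hc, card_sym2_fun, card_sym2_fun, Nat.card_zmod] at h₁
  rw [hs, Psym]
  change (divSymmCount ϖ (fun _ : Fin k => True) : ℝ) = _
  have hI0 : (Nat.card I : ℝ) ≠ 0 := Nat.cast_ne_zero.2 Nat.card_pos.ne'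
  have hp0 : ((p : ℝ)) ≠ 0 := Nat.cast_ne_zero.2 hp.ne_zero
  have h₁' := congrArg (Nat.cast : ℕ → ℝ) h₁
  have h₂' := congrArg (Nat.cast : ℕ → ℝ) h₂
  push_cast at h₁' h₂' ⊢
  rw [mul_div_assoc', eq_div_iff (pow_ne_zero _ (pow_ne_zero _ hp0))]
  refine mul_right_cancel₀ (pow_ne_zero (k * (k + 1) / 2) (pow_ne_zero μ hp0)) ?_
  linear_combination (Nat.card I : ℝ) ^ (k * (k + 1) / 2) * h₂' -
    ((p : ℝ) ^ (μ - k)) ^ (k * (k + 1) / 2) * h₁'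

end ZModCounting

theorem Psym_one_right (n : ℕ) : Psym n 1 = 0 := by
  have : IsEmpty {A : Matrix (Fin n) (Fin n) (ZMod 1) // A.IsSymm ∧ A.det ≠ 0} :=
    ⟨fun A => A.2.2 (Subsingleton.elim _ _)⟩
  rw [Psym, Nsym, Nat.card_of_isEmpty, Nat.cast_zero, zero_div]

/-- Expansion of `Psym n (p ^ μ)` according to the corank modulo `p`. -/
theorem Psym_eq_sum_corankProb {p μ : ℕ} (hp : p.Prime) (hμ : 1 ≤ μ) (n : ℕ) :
    Psym n (p ^ μ) =
      ∑ k ∈ Finset.range (n + 1), corankProb (1 / p : ℝ) n k * Psym k (p ^ (μ - k)) := by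
  have : NeZero (p ^ μ) := ⟨(pow_pos hp.pos μ).ne'⟩
  have hp0 : (p : ℝ) ≠ 0 := Nat.cast_ne_zero.2 hp.ne_zero
  have hs : (Nat.card {x : ZMod (p ^ μ) // (p : ZMod (p ^ μ)) ∣ x} : ℝ) =
      1 / p * Nat.card (ZMod (p ^ μ)) := by
    rw [Nat.card_zmod, one_div, eq_inv_mul_iff_mul_eq₀ hp0]
    exact_mod_cast prime_mul_card_dvd hp hμ
  have hc : Nsym n (p ^ μ) = divSymmCount (p : ZMod (p ^ μ)) (fun _ : Fin n => False) := by
    simp [Nsym, divSymmCount, IsDivSymm]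
  have h := divSymmCount_eq_sum_corankProb (p : ZMod (p ^ μ)) (prime_dvd_iff_not_isUnit hp hμ)
    (one_div_pos.2 (Nat.cast_pos.2 hp.pos))
    ((div_lt_one (Nat.cast_pos.2 hp.pos)).2 (Nat.one_lt_cast.2 hp.one_lt)) hs
    (fun k => Psym k (p ^ (μ - k))) (fun k => by rw [← hs]; exact divSymmCount_true_eq hp k)
    n (Fin n) (fun _ => False) 0 (by simp) (by simp)
  simp only [mul_zero, zero_add, Nat.zero_div, pow_zero, mul_one, Nat.card_zmod] at h
  rw [Psym, hc, h, mul_div_cancel_left₀]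
  exact pow_ne_zero _ (Nat.cast_ne_zero.2 (NeZero.ne _))

theorem Psym_even_from_odd (p : ℕ) (hp : p.Prime) (q : ℝ) (hq : q = 1 / p)
    (μ : ℕ) (hμ : 1 ≤ μ) (n : ℕ) (hn : 1 ≤ n) (hodd : Odd n) :
    (1 - q ^ n) * Psym (n - 1) (p ^ μ) =
      Psym n (p ^ μ) - q ^ n * Psym n (p ^ (μ - 1)) := by
  obtain ⟨h, rfl⟩ := hodd
  subst hq
  exact even_from_odd_of_corank_expansion (one_div_pos.2 (Nat.cast_pos.2 hp.pos))
    ((div_lt_one (Nat.cast_pos.2 hp.pos)).2 (Nat.one_lt_cast.2 hp.one_lt))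
    (fun n μ => Psym n (p ^ μ)) (fun n => by rw [pow_zero, Psym_one_right])
    (fun n μ hμ => Psym_eq_sum_corankProb hp hμ n) μ h
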